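/- arXiv:2511.10000 — 2 statements merged into one kernel-verified Lean document; each statement's English description precedes it below -/
import Mathlib

section
/- For every multi-level apportionment instance, every non-negative integer h, and every tie-breaking, the allocation of h seats produced by the upper-compliant multi-level quota method fulfills upper quota. Moreover, the method satisfies house monotonicity: when the total number of seats increases from h to h+1, every node receives at least as many seats as before. -/
/-- A multi-level apportionment instance: a rooted tree on nodes `0, …, n`
(root `0`, encoded by a parent function with `parent i < i` for `i ≠ 0`),
together with entitlements `W`. -/
structure MLA where
  n : ℕ
  parent : Fin (n + 1) → Fin (n + 1)
  parent_lt : ∀ i : Fin (n + 1), i ≠ 0 → (parent i : ℕ) < (i : ℕ)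
  W : Fin (n + 1) → ℝ
  W_pos : ∀ i, 0 < W i
  W_le_one : ∀ i, W i ≤ 1
  W_root : W 0 = 1
  W_sum : ∀ i : Fin (n + 1),
    (Finset.univ.filter (fun c => c ≠ 0 ∧ parent c = i)).Nonempty →
    ∑ c ∈ Finset.univ.filter (fun c => c ≠ 0 ∧ parent c = i), W c = 1

namespace MLA

variable (T : MLA)

/-- The set of children of node `i`. -/
def children (i : Fin (T.n + 1)) : Finset (Fin (T.n + 1)) :=
  Finset.univ.filter (fun c => c ≠ 0 ∧ T.parent c = i)

/-- The ancestor set `A(i)`: `A(0) = {0}` and `A(i) = {parent i} ∪ A(parent i)`. -/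
def ancestors (i : Fin (T.n + 1)) : Finset (Fin (T.n + 1)) :=
  if h : i = 0 then {0} else insert (T.parent i) (ancestors (T.parent i))
termination_by (i : ℕ)
decreasing_by exact T.parent_lt i h

/-- The entitlement of node `i` relative to the root: `R i = ∏_{a ∈ A(i) ∪ {i}} W a`. -/
def R (i : Fin (T.n + 1)) : ℝ := ∏ a ∈ insert i (T.ancestors i), T.W a

/-- `V` is an allocation of `h` seats. -/
def IsAlloc (h : ℕ) (V : Fin (T.n + 1) → ℕ) : Prop :=
  V 0 = h ∧ ∀ i, (T.children i).Nonempty → V i = ∑ c ∈ T.children i, V c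

/-- `V` fulfills lower quota: `V i ≥ LQ i = max_{a ∈ A(i)} ⌊(R i / R a) · V a⌋`. -/
def FulfillsLowerQuota (V : Fin (T.n + 1) → ℕ) : Prop :=
  ∀ i, ∀ a ∈ T.ancestors i, ⌊T.R i / T.R a * (V a : ℝ)⌋ ≤ (V i : ℤ)

/-- `V` fulfills upper quota: `V i ≤ UQ i = min_{a ∈ A(i)} ⌈(R i / R a) · V a⌉`. -/
def FulfillsUpperQuota (V : Fin (T.n + 1) → ℕ) : Prop :=
  ∀ i, ∀ a ∈ T.ancestors i, (V i : ℤ) ≤ ⌈T.R i / T.R a * (V a : ℝ)⌉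


/-- `P` is the set of nodes receiving the new seat in one step of an iterative
method with selection criterion `crit` (to be minimized among children) and
eligibility constraint `elig`: `P` is a root-to-leaf path, each non-root node on
the path is an eligible child of its parent minimizing `crit` among all eligible
children, and the seat counts along `P` each increase by one. -/
def IsStepWith (crit : (Fin (T.n + 1) → ℕ) → Fin (T.n + 1) → ℝ)
    (elig : (Fin (T.n + 1) → ℕ) → Fin (T.n + 1) → Prop)
    (P : Finset (Fin (T.n + 1))) (Vh Vh1 : Fin (T.n + 1) → ℕ) : Prop :=
  (0 : Fin (T.n + 1)) ∈ P ∧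
  (∀ i ∈ P, i ≠ 0 → T.parent i ∈ P) ∧
  (∀ i ∈ P, (T.children i).Nonempty → ∃ c ∈ T.children i, c ∈ P) ∧
  (∀ c ∈ P, ∀ d ∈ P, c ≠ 0 → d ≠ 0 → T.parent c = T.parent d → c = d) ∧
  (∀ c ∈ P, c ≠ 0 → elig Vh c ∧
    ∀ d ∈ T.children (T.parent c), elig Vh d → crit Vh c ≤ crit Vh d) ∧
  (∀ i, Vh1 i = Vh i + if i ∈ P then 1 else 0)

/-- `V : ℕ → (nodes → ℕ)` is a run of the iterative method given by `crit` and
`elig` (with arbitrary tie-breaking): `V 0` is the all-zero allocation and each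
`V (h+1)` is obtained from `V h` by allocating one more seat along a path. -/
def IsRun (crit : (Fin (T.n + 1) → ℕ) → Fin (T.n + 1) → ℝ)
    (elig : (Fin (T.n + 1) → ℕ) → Fin (T.n + 1) → Prop)
    (V : ℕ → Fin (T.n + 1) → ℕ) : Prop :=
  (∀ i, V 0 i = 0) ∧ ∀ h, ∃ P, T.IsStepWith crit elig P (V h) (V (h + 1))

/-- Adams' criterion: a child `c` minimizing `V c / R c` receives the seat. -/
noncomputable def adamsCrit (V : Fin (T.n + 1) → ℕ) (c : Fin (T.n + 1)) : ℝ :=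
  (V c : ℝ) / T.R c

/-- Jefferson's criterion: a child `c` minimizing `(V c + 1) / R c` receives the seat. -/
noncomputable def jeffersonCrit (V : Fin (T.n + 1) → ℕ) (c : Fin (T.n + 1)) : ℝ :=
  ((V c : ℝ) + 1) / T.R c

/-- Trivial eligibility constraint: every child is eligible. -/
def trivElig (_ : Fin (T.n + 1) → ℕ) (_ : Fin (T.n + 1)) : Prop := True

/-- Eligibility constraint of the quota method: `V c / W c < V (parent c) + 1`. -/
def quotaElig (V : Fin (T.n + 1) → ℕ) (c : Fin (T.n + 1)) : Prop :=
  (V c : ℝ) / T.W c < (V (T.parent c) : ℝ) + 1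

/-- Eligibility constraint of the upper-compliant quota method:
`V c / R c < (V a + 1) / R a` for every ancestor `a` of `c`. -/
def ucElig (V : Fin (T.n + 1) → ℕ) (c : Fin (T.n + 1)) : Prop :=
  ∀ a ∈ T.ancestors c, (V c : ℝ) / T.R c < ((V a : ℝ) + 1) / T.R a

end MLA

namespace MLA

lemma R_pos' (T : MLA) (i : Fin (T.n + 1)) : 0 < T.R i :=
  Finset.prod_pos fun a _ => T.W_pos a

/-- A set of nodes closed under taking parents contains all ancestors of its members. -/
lemma ancestors_mem (T : MLA) (P : Finset (Fin (T.n + 1))) (h0 : (0 : Fin (T.n + 1)) ∈ P)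
    (hp : ∀ i ∈ P, i ≠ 0 → T.parent i ∈ P) :
    ∀ (m : ℕ) (i : Fin (T.n + 1)), (i : ℕ) ≤ m → i ∈ P → ∀ a ∈ T.ancestors i, a ∈ P := by
  intro m
  induction m with
  | zero =>
    intro i hi hiP a ha
    have hi0 : i = 0 := Fin.ext (by simpa using hi)
    rw [ancestors, dif_pos hi0, Finset.mem_singleton] at ha
    exact ha ▸ h0
  | succ m ih =>
    intro i hi hiP a ha
    by_cases hi0 : i = 0
    · rw [ancestors, dif_pos hi0, Finset.mem_singleton] at ha
      exact ha ▸ h0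
    · rw [ancestors, dif_neg hi0, Finset.mem_insert] at ha
      have hlt := T.parent_lt i hi0
      rcases ha with ha | ha
      · exact ha ▸ hp i hiP hi0
      · exact ih (T.parent i) (by omega) (hp i hiP hi0) a ha

end MLA

/-- Any run of the upper-compliant multi-level quota method
fulfills upper quota after every number of seats, and satisfies house
monotonicity. -/
theorem uc_quota_method_upper_quota_and_house_monotone (T : MLA)
    (V : ℕ → Fin (T.n + 1) → ℕ)
    (hrun : T.IsRun T.jeffersonCrit T.ucElig V) :
    (∀ h : ℕ, T.FulfillsUpperQuota (V h)) ∧ (∀ h : ℕ, ∀ i, V h i ≤ V (h + 1) i) := by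
  obtain ⟨hz, hstep⟩ := hrun
  have hmono : ∀ h : ℕ, ∀ i, V h i ≤ V (h + 1) i := by
    intro h i
    obtain ⟨P, -, -, -, -, -, hV⟩ := hstep h
    rw [hV i]
    exact Nat.le_add_right _ _
  refine ⟨?_, hmono⟩
  intro h
  induction h with
  | zero =>
    intro i a _
    simp [hz]
  | succ h ih =>
    intro i a ha
    have hRi := T.R_pos' i
    have hRa := T.R_pos' a
    obtain ⟨P, h0, hp, -, -, hel, hV⟩ := hstep h
    by_cases hi0 : i = 0
    · subst hi0
      rw [MLA.ancestors, dif_pos rfl, Finset.mem_singleton] at ha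
      subst ha
      rw [div_self hRi.ne', one_mul, Int.ceil_natCast]
    by_cases hiP : i ∈ P
    · have haP := T.ancestors_mem P h0 hp _ i le_rfl hiP a ha
      have hlt := (hel i hiP hi0).1 a ha
      rw [hV i, hV a, if_pos hiP, if_pos haP]
      push_cast
      rw [Int.add_one_le_iff, Int.lt_ceil]
      push_cast
      rw [div_lt_iff₀ hRi] at hlt
      calc (V h i : ℝ) < ((V h a : ℝ) + 1) / T.R a * T.R i := hlt
        _ = T.R i / T.R a * ((V h a : ℝ) + 1) := by ring
    · have h1 := ih i a ha
      rw [hV i, if_neg hiP, add_zero]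
      refine h1.trans (Int.ceil_le_ceil ?_)
      have : (V h a : ℝ) ≤ V (h + 1) a := by exact_mod_cast hmono h a
      exact mul_le_mul_of_nonneg_left this (div_pos hRi hRa).le
end

section
/- For every multi-level apportionment instance and every non-negative integer h, there exists an allocation of h seats such that ⌊R_i · h⌋ ≤ V_i ≤ ⌈R_i · h⌉ for every node i, i.e., every node stays within its lower and upper quota relative to the root. -/
lemma exists_int_between {α : Type} [DecidableEq α] (s : Finset α) (l u : α → ℤ)
    (hlu : ∀ i, l i ≤ u i) (k : ℤ) (h1 : ∑ i ∈ s, l i ≤ k) (h2 : k ≤ ∑ i ∈ s, u i) :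
    ∃ f : α → ℤ, (∀ i ∈ s, l i ≤ f i ∧ f i ≤ u i) ∧ ∑ i ∈ s, f i = k := by
  induction s using Finset.induction_on generalizing k with
  | empty =>
    refine ⟨l, by simp, ?_⟩
    simp at *
    omega
  | insert a s ha ih =>
    rw [Finset.sum_insert ha] at h1 h2
    have hsum : ∑ i ∈ s, l i ≤ ∑ i ∈ s, u i := Finset.sum_le_sum fun i _ => hlu i
    have hla := hlu a
    obtain ⟨x, hx1, hx2, hx3, hx4⟩ : ∃ x, l a ≤ x ∧ x ≤ u a ∧
        ∑ i ∈ s, l i ≤ k - x ∧ k - x ≤ ∑ i ∈ s, u i := by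
      refine ⟨max (l a) (k - ∑ i ∈ s, u i), ?_, ?_, ?_, ?_⟩ <;> omega
    obtain ⟨f, hf, hfs⟩ := ih (k - x) hx3 hx4
    have hne : ∀ i ∈ s, i ≠ a := fun i hi hia => ha (hia ▸ hi)
    refine ⟨fun i => if i = a then x else f i, ?_, ?_⟩
    · intro i hi
      rcases Finset.mem_insert.1 hi with rfl | hi
      · simp [hx1, hx2]
      · simpa [hne i hi] using hf i hi
    · rw [Finset.sum_insert ha, Finset.sum_congr rfl (g := f) (fun i hi => by simp [hne i hi]), hfs]
      simp

namespace MLA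

variable (T : MLA)

lemma ancestors_le (i : Fin (T.n + 1)) : ∀ a ∈ T.ancestors i, (a : ℕ) ≤ i := by
  intro a ha
  rw [ancestors] at ha
  split_ifs at ha with h
  · simp at ha
    simp [ha]
  · have hlt := T.parent_lt i h
    rcases Finset.mem_insert.1 ha with rfl | ha
    · omega
    · have := ancestors_le (T.parent i) a ha
      omega
termination_by (i : ℕ)

lemma R_root : T.R 0 = 1 := by
  rw [R, ancestors]
  simp [T.W_root]

lemma R_eq_mul_parent (i : Fin (T.n + 1)) (h : i ≠ 0) : T.R i = T.W i * T.R (T.parent i) := by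
  have hlt := T.parent_lt i h
  rw [R, R, ancestors, dif_neg h, Finset.prod_insert]
  intro hi
  rcases Finset.mem_insert.1 hi with hi | hi
  · rw [← hi] at hlt
    omega
  · have := T.ancestors_le _ _ hi
    omega

lemma sum_R (i : Fin (T.n + 1)) (hi : (T.children i).Nonempty) :
    ∑ c ∈ T.children i, T.R c = T.R i := by
  have h1 : ∑ c ∈ T.children i, T.R c = ∑ c ∈ T.children i, T.W c * T.R i := by
    refine Finset.sum_congr rfl fun c hc => ?_
    simp only [children, Finset.mem_filter] at hc
    rw [T.R_eq_mul_parent c hc.2.1, hc.2.2]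
  rw [h1, ← Finset.sum_mul]
  have := T.W_sum i hi
  rw [children, this, one_mul]

lemma R_nonneg (i : Fin (T.n + 1)) : 0 ≤ T.R i :=
  Finset.prod_nonneg fun a _ => (T.W_pos a).le

lemma exists_split (h : ℕ) (i : Fin (T.n + 1)) (v : ℕ) : ∃ f : Fin (T.n + 1) → ℕ,
    (T.children i).Nonempty → ⌊T.R i * (h : ℝ)⌋ ≤ (v : ℤ) → (v : ℤ) ≤ ⌈T.R i * (h : ℝ)⌉ →
    (∀ c ∈ T.children i, ⌊T.R c * (h : ℝ)⌋ ≤ (f c : ℤ) ∧ (f c : ℤ) ≤ ⌈T.R c * (h : ℝ)⌉) ∧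
    v = ∑ c ∈ T.children i, f c := by
  by_cases hyp : (T.children i).Nonempty ∧ ⌊T.R i * (h : ℝ)⌋ ≤ (v : ℤ) ∧
      (v : ℤ) ≤ ⌈T.R i * (h : ℝ)⌉
  · obtain ⟨hne, hl, hu⟩ := hyp
    have hs : T.R i * (h : ℝ) = ∑ c ∈ T.children i, T.R c * (h : ℝ) := by
      rw [← Finset.sum_mul, T.sum_R i hne]
    obtain ⟨f, hf, hfs⟩ := exists_int_between (T.children i)
      (fun c => ⌊T.R c * (h : ℝ)⌋) (fun c => ⌈T.R c * (h : ℝ)⌉)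
      (fun c => Int.floor_le_ceil _) v
      (by
        refine le_trans (Int.le_floor.2 ?_) hl
        rw [hs]
        push_cast
        exact Finset.sum_le_sum fun c _ => Int.floor_le _)
      (by
        refine le_trans hu (Int.ceil_le.2 ?_)
        rw [hs]
        push_cast
        exact Finset.sum_le_sum fun c _ => Int.le_ceil _)
    have hf0 : ∀ c ∈ T.children i, ((f c).toNat : ℤ) = f c := fun c hc =>
      Int.toNat_of_nonneg (le_trans
        (Int.floor_nonneg.2 (mul_nonneg (T.R_nonneg c) (Nat.cast_nonneg h))) (hf c hc).1)
    refine ⟨fun c => (f c).toNat, fun _ _ _ => ⟨fun c hc => ?_, ?_⟩⟩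
    · rw [hf0 c hc]
      exact hf c hc
    · zify
      rw [← hfs]
      exact (Finset.sum_congr rfl hf0).symm
  · exact ⟨fun _ => 0, fun a b c => absurd ⟨a, b, c⟩ hyp⟩

/-- Top-down allocation. -/
noncomputable def topDown (h : ℕ) (i : Fin (T.n + 1)) : ℕ :=
  if hi : i = 0 then h
  else (T.exists_split h (T.parent i) (topDown h (T.parent i))).choose i
termination_by (i : ℕ)
decreasing_by exact T.parent_lt i hi

lemma topDown_bounds (h : ℕ) (i : Fin (T.n + 1)) :
    ⌊T.R i * (h : ℝ)⌋ ≤ (T.topDown h i : ℤ) ∧ (T.topDown h i : ℤ) ≤ ⌈T.R i * (h : ℝ)⌉ := by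
  by_cases hi : i = 0
  · subst hi
    rw [topDown, T.R_root]
    simp
  · have hlt := T.parent_lt i hi
    have ih := topDown_bounds h (T.parent i)
    have hc : i ∈ T.children (T.parent i) := by simp [children, hi]
    have := ((T.exists_split h (T.parent i) (T.topDown h (T.parent i))).choose_spec
      ⟨i, hc⟩ ih.1 ih.2).1 i hc
    rw [topDown, dif_neg hi]
    exact this
termination_by (i : ℕ)

lemma topDown_sum (h : ℕ) (i : Fin (T.n + 1)) (hne : (T.children i).Nonempty) :
    T.topDown h i = ∑ c ∈ T.children i, T.topDown h c := by
  have ih := T.topDown_bounds h i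
  refine ((T.exists_split h i (T.topDown h i)).choose_spec hne ih.1 ih.2).2.trans ?_
  refine Finset.sum_congr rfl fun c hc => ?_
  simp only [children, Finset.mem_filter] at hc
  obtain ⟨-, hc0, rfl⟩ := hc
  conv_rhs => rw [topDown, dif_neg hc0]

end MLA

/-- For every multi-level apportionment instance and every
`h`, there exists an allocation of `h` seats with
`⌊R_i · h⌋ ≤ V_i ≤ ⌈R_i · h⌉` for every node `i` (quotas relative to the
root). -/
theorem exists_alloc_within_root_quotas (T : MLA) (h : ℕ) :
    ∃ V : Fin (T.n + 1) → ℕ, T.IsAlloc h V ∧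
      ∀ i, ⌊T.R i * (h : ℝ)⌋ ≤ (V i : ℤ) ∧ (V i : ℤ) ≤ ⌈T.R i * (h : ℝ)⌉ := by
  refine ⟨T.topDown h, ⟨?_, T.topDown_sum h⟩, T.topDown_bounds h⟩
  rw [MLA.topDown, dif_pos rfl]
end
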